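/- Let m ≥ 2 and let U_1,…,U_t be scattered F_q-subspaces of F_{q^m}^k of dimensions n_1 ≥ … ≥ n_t ≥ 1 whose linear sets L_{U_1},…,L_{U_t} are pairwise disjoint and do not cover PG(k−1,q^m), and which together span F_{q^m}^k over F_{q^m}. Then the geometric dual code C(U_1^{⊥'},…,U_t^{⊥'}) is an [(mk−n_1,…,mk−n_t),k]_{q^m/q} sum-rank metric code whose nonzero codewords have exactly the two weights tm and tm−1 (both occurring), and whose set of rank-lists is {(m,…,m)} ∪ {(m,…,m,m−1,m,…,m) : the entry m−1 in position j, for j = 1,…,t}. -/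

import Mathlib

/-!
Every codeword is `x G` for a unique `x`, and it is nonzero iff `x ≠ 0`. Its `i`-th block has as
`F_q`-span of entries the image `W` of `U_i^{⊥'}` under `y ↦ ∑ⱼ xⱼ yⱼ`. For the trace form on
`F_{q^m}`, an element `a` is orthogonal to `W` iff `a x ∈ U_i^{⊥'⊥'} = U_i`; hence `dim W = m - w_i(x)`,
where `w_i(x)` is the weight of the point `⟨x⟩` in `L_{U_i}` (`finrank_map_dualPerp`). As the `U_i` are
scattered with disjoint linear sets, at most one `w_i(x)` is nonzero, and then it is `1`. A point
outside all the linear sets gives the rank-list `(m,…,m)`, and a point of `L_{U_j}` the one with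
`m - 1` in position `j`.
-/


open Module Submodule

/-- The rank over `Fq` of a vector with entries in `Fqm`: the `Fq`-dimension of the
`Fq`-span of its entries. -/
noncomputable def rk (Fq : Type) [Field Fq] {Fqm : Type} [Field Fqm] [Algebra Fq Fqm]
    {n : ℕ} (v : Fin n → Fqm) : ℕ :=
  Module.finrank Fq (Submodule.span Fq (Set.range v))

/-- The sum-rank weight of a vector `x ∈ ⊕ᵢ Fqm^{nᵢ}`. -/
noncomputable def srw (Fq : Type) [Field Fq] {Fqm : Type} [Field Fqm] [Algebra Fq Fqm]
    {t : ℕ} {n : Fin t → ℕ} (x : (i : Fin t) → Fin (n i) → Fqm) : ℕ :=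
  ∑ i, rk Fq (x i)

/-- `G` is a generator matrix of the sum-rank metric code `C`. -/
def IsGenMatrix {Fqm : Type} [Field Fqm] {t k : ℕ} {n : Fin t → ℕ}
    (C : Submodule Fqm ((i : Fin t) → Fin (n i) → Fqm))
    (G : Fin k → (i : Fin t) → Fin (n i) → Fqm) : Prop :=
  LinearIndependent Fqm G ∧ Submodule.span Fqm (Set.range G) = C

/-- Nondegeneracy: the columns of each block of a generator matrix are
`Fq`-linearly independent. -/
def Nondeg (Fq : Type) [Field Fq] {Fqm : Type} [Field Fqm] [Algebra Fq Fqm] {t k : ℕ}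
    {n : Fin t → ℕ} (G : Fin k → (i : Fin t) → Fin (n i) → Fqm) : Prop :=
  ∀ i : Fin t, LinearIndependent Fq (fun j : Fin (n i) => fun r : Fin k => G r i j)

/-- A sum-rank metric code is minimal if, whenever the (blockwise) sum-rank support of a
codeword `c'` is contained in the support of a codeword `c`, then `c'` is a scalar
multiple of `c`. -/
def IsMinimal (Fq : Type) [Field Fq] {Fqm : Type} [Field Fqm] [Algebra Fq Fqm] {t : ℕ}
    {n : Fin t → ℕ} (C : Submodule Fqm ((i : Fin t) → Fin (n i) → Fqm)) : Prop :=
  ∀ c ∈ C, ∀ c' ∈ C,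
    (∀ i, Submodule.span Fq (Set.range (c' i)) ≤ Submodule.span Fq (Set.range (c i))) →
    ∃ a : Fqm, c' = a • c

/-- The dual `U^{⊥'}` of an `Fq`-subspace of `Fqm^k`, with respect to the (fixed)
nondegenerate reflexive `Fq`-bilinear form `σ'(x,y) = Tr_{Fqm/Fq}(∑ⱼ xⱼ yⱼ)`. -/
noncomputable def dualPerp (Fq : Type) [Field Fq] {Fqm : Type} [Field Fqm] [Algebra Fq Fqm]
    {k : ℕ} (U : Submodule Fq (Fin k → Fqm)) : Submodule Fq (Fin k → Fqm) where
  carrier := {y | ∀ u ∈ U, Algebra.trace Fq Fqm (∑ j, u j * y j) = 0}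
  zero_mem' := by intro u hu; simp
  add_mem' := by
    intro y z hy hz u hu
    have h : (∑ j, u j * (y + z) j) = (∑ j, u j * y j) + (∑ j, u j * z j) := by
      rw [← Finset.sum_add_distrib]
      exact Finset.sum_congr rfl fun j _ => by simp [mul_add]
    rw [h, map_add, hy u hu, hz u hu, add_zero]
  smul_mem' := by
    intro c y hy u hu
    have h : (∑ j, u j * (c • y) j) = c • (∑ j, u j * y j) := by
      rw [Finset.smul_sum]
      exact Finset.sum_congr rfl fun j _ => by simp [Algebra.mul_smul_comm]
    rw [h, map_smul, hy u hu, smul_zero]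

/-- The `Fq`-subspace of `Fqm^k` underlying the `Fqm`-line spanned by `v`. -/
def lineFq (Fq : Type) [Field Fq] {Fqm : Type} [Field Fqm] [Algebra Fq Fqm]
    {k : ℕ} (v : Fin k → Fqm) : Submodule Fq (Fin k → Fqm) :=
  Submodule.restrictScalars Fq (Submodule.span Fqm {v})

/-- An `Fq`-subspace `U` of `Fqm^k` is scattered if every point of the associated linear
set `L_U` has weight one. -/
noncomputable def Scattered (Fq : Type) [Field Fq] {Fqm : Type} [Field Fqm] [Algebra Fq Fqm]
    {k : ℕ} (U : Submodule Fq (Fin k → Fqm)) : Prop :=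
  ∀ v : Fin k → Fqm, v ≠ 0 → Module.finrank Fq ↥(U ⊓ lineFq Fq v) ≤ 1

/-- Gaussian binomial coefficient with base `Q`. -/
def gaussBinom (Q : ℕ) : ℕ → ℕ → ℕ
  | _, 0 => 1
  | 0, _ + 1 => 0
  | a + 1, b + 1 => gaussBinom Q a b + Q ^ (b + 1) * gaussBinom Q a (b + 1)

/-- The `Fq`-bilinear form `σ'(x,y) = Tr(∑ⱼ xⱼ yⱼ)` defining `dualPerp`. -/
noncomputable def sigmaForm (Fq Fqm : Type) [Field Fq] [Field Fqm] [Algebra Fq Fqm] (k : ℕ) :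
    LinearMap.BilinForm Fq (Fin k → Fqm) :=
  LinearMap.mk₂ Fq (fun x y => Algebra.trace Fq Fqm (∑ j, x j * y j))
    (by intro x y z; simp [add_mul, Finset.sum_add_distrib])
    (by intro c x y; simp [← Finset.smul_sum])
    (by intro x y z; simp [mul_add, Finset.sum_add_distrib])
    (by intro c x y; simp [← Finset.smul_sum])

lemma sigmaForm_apply {Fq Fqm : Type} [Field Fq] [Field Fqm] [Algebra Fq Fqm] {k : ℕ}
    (x y : Fin k → Fqm) :
    sigmaForm Fq Fqm k x y = Algebra.trace Fq Fqm (∑ j, x j * y j) := rfl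

lemma sigmaForm_isRefl {Fq Fqm : Type} [Field Fq] [Field Fqm] [Algebra Fq Fqm] {k : ℕ} :
    (sigmaForm Fq Fqm k).IsRefl := by
  intro x y h
  rw [sigmaForm_apply] at h ⊢
  simpa only [mul_comm] using h

lemma sigmaForm_nondegenerate {Fq Fqm : Type} [Field Fq] [Fintype Fq] [Field Fqm] [Fintype Fqm]
    [Algebra Fq Fqm] {k : ℕ} : (sigmaForm Fq Fqm k).Nondegenerate := by
  have hrefl : LinearMap.IsRefl (sigmaForm Fq Fqm k) := fun x y => sigmaForm_isRefl x y
  refine hrefl.nondegenerate_iff_separatingLeft.2 fun x hx => ?_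
  funext j
  refine (traceForm_nondegenerate Fq Fqm).1 (x j) fun b => ?_
  have h := hx (Pi.single j b)
  rw [sigmaForm_apply, Finset.sum_eq_single j] at h
  · simpa [Algebra.traceForm_apply] using h
  · intro i _ hi; simp [hi]
  · simp

lemma dualPerp_eq_orthogonal {Fq Fqm : Type} [Field Fq] [Field Fqm] [Algebra Fq Fqm] {k : ℕ}
    (U : Submodule Fq (Fin k → Fqm)) :
    dualPerp Fq U = (sigmaForm Fq Fqm k).orthogonal U := rfl

/-- The dot product with `x`, as an `Fq`-linear functional `Fqm^k → Fqm`. -/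
noncomputable def dotMap (Fq : Type) [Field Fq] {Fqm : Type} [Field Fqm] [Algebra Fq Fqm]
    {k : ℕ} (x : Fin k → Fqm) : (Fin k → Fqm) →ₗ[Fq] Fqm :=
  (∑ j, x j • LinearMap.proj (R := Fqm) (φ := fun _ : Fin k => Fqm) j).restrictScalars Fq

lemma dotMap_apply {Fq Fqm : Type} [Field Fq] [Field Fqm] [Algebra Fq Fqm] {k : ℕ}
    (x y : Fin k → Fqm) : dotMap Fq x y = ∑ j, x j * y j := by
  simp [dotMap]

/-- For `x ≠ 0`, the image of `U^{⊥'}` under the dot product with `x` has dimension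
`m - w`, where `w` is the weight of `⟨x⟩` in `L_U`: its orthogonal for the trace form is
`{a | a x ∈ U}`. -/
lemma finrank_map_dualPerp {Fq Fqm : Type} [Field Fq] [Fintype Fq] [Field Fqm] [Fintype Fqm]
    [Algebra Fq Fqm] {k : ℕ} (U : Submodule Fq (Fin k → Fqm)) {x : Fin k → Fqm} (hx : x ≠ 0) :
    Module.finrank Fq ((dualPerp Fq U).map (dotMap Fq x))
      = Module.finrank Fq Fqm - Module.finrank Fq ↥(U ⊓ lineFq Fq x) := by
  have : Module.Finite Fq Fqm := Module.Finite.of_finite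
  let L : Fqm →ₗ[Fq] (Fin k → Fqm) := (LinearMap.toSpanSingleton Fqm _ x).restrictScalars Fq
  have hL : ∀ a, L a = a • x := fun a => rfl
  have hLinj : Function.Injective L := fun a b h => smul_left_injective Fqm hx h
  have hrange : LinearMap.range L = lineFq Fq x := by
    ext y
    simp [lineFq, hL, Submodule.mem_span_singleton]
  have hrefl : (Algebra.traceForm Fq Fqm).IsRefl :=
    (Algebra.traceForm_isSymm Fq (S := Fqm)).isRefl
  have horth : (Algebra.traceForm Fq Fqm).orthogonal ((dualPerp Fq U).map (dotMap Fq x))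
      = U.comap L := by
    have hUU := LinearMap.BilinForm.orthogonal_orthogonal
      (sigmaForm_nondegenerate (Fq := Fq) (Fqm := Fqm) (k := k)) sigmaForm_isRefl U
    ext a
    rw [Submodule.mem_comap, ← Submodule.ext_iff.1 hUU (L a), LinearMap.BilinForm.mem_orthogonal_iff,
      LinearMap.BilinForm.mem_orthogonal_iff, dualPerp_eq_orthogonal]
    simp only [Submodule.mem_map, forall_exists_index, and_imp, forall_apply_eq_imp_iff₂,
      sigmaForm_apply, Algebra.traceForm_apply, dotMap_apply, hL]
    refine forall₂_congr fun y _ => ?_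
    rw [Finset.sum_mul]
    simp only [Pi.smul_apply, smul_eq_mul]
    refine Eq.congr (congrArg _ (Finset.sum_congr rfl fun j _ => ?_)) rfl
    ring
  have hfin := LinearMap.BilinForm.finrank_orthogonal (traceForm_nondegenerate Fq Fqm)
    ((dualPerp Fq U).map (dotMap Fq x))
  have hle := Submodule.finrank_le ((dualPerp Fq U).map (dotMap Fq x))
  have hcomap : Module.finrank Fq (U.comap L) = Module.finrank Fq ↥(U ⊓ lineFq Fq x) := by
    rw [(Submodule.equivMapOfInjective L hLinj _).finrank_eq, Submodule.map_comap_eq, hrange, inf_comm]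
  rw [horth, hcomap] at hfin
  omega

/-- Let `U₁,…,U_t` be scattered `Fq`-subspaces of `Fqm^k` of
dimensions `n₁ ≥ … ≥ n_t ≥ 1` whose linear sets are pairwise disjoint and do not cover
`PG(k-1,q^m)`, and which together span `Fqm^k` over `Fqm`. Then the geometric dual code
`C(U₁^{⊥'},…,U_t^{⊥'})` has exactly the two nonzero weights `tm` and `tm-1` (both
occurring), and its set of rank-lists is `{(m,…,m)} ∪ {(m,…,m-1,…,m)}`. -/
theorem two_weight_construction
    {Fq Fqm : Type} [Field Fq] [Fintype Fq] [Field Fqm] [Fintype Fqm] [Algebra Fq Fqm]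
    {m k t : ℕ} (hm : Module.finrank Fq Fqm = m) (hm2 : 2 ≤ m) (hk : 2 ≤ k) (ht : 1 ≤ t)
    {n : Fin t → ℕ} (hmono : ∀ i j : Fin t, i ≤ j → n j ≤ n i) (hn : ∀ i, 1 ≤ n i)
    (U : Fin t → Submodule Fq (Fin k → Fqm))
    (hdim : ∀ i, Module.finrank Fq ↥(U i) = n i)
    (hscat : ∀ i, Scattered Fq (U i))
    (hdisj : ∀ i j : Fin t, i ≠ j → ∀ v : Fin k → Fqm, v ≠ 0 →
      U i ⊓ lineFq Fq v = ⊥ ∨ U j ⊓ lineFq Fq v = ⊥)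
    (hnotcover : ∃ v : Fin k → Fqm, v ≠ 0 ∧ ∀ i, U i ⊓ lineFq Fq v = ⊥)
    (hspan : Submodule.span Fqm (⋃ i, (U i : Set (Fin k → Fqm))) = ⊤)
    (C : Submodule Fqm ((i : Fin t) → Fin (m * k - n i) → Fqm))
    (G : Fin k → (i : Fin t) → Fin (m * k - n i) → Fqm)
    (hG : IsGenMatrix C G) (hnd : Nondeg Fq G)
    (hcols : ∀ i, Submodule.span Fq
        (Set.range fun j : Fin (m * k - n i) => fun rr : Fin k => G rr i j)
      = dualPerp Fq (U i)) :
    (∀ c ∈ C, c ≠ 0 → srw Fq c = t * m ∨ srw Fq c = t * m - 1) ∧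
    (∃ c ∈ C, c ≠ 0 ∧ srw Fq c = t * m) ∧
    (∃ c ∈ C, c ≠ 0 ∧ srw Fq c = t * m - 1) ∧
    ({rl : Fin t → ℕ | ∃ c ∈ C, c ≠ 0 ∧ rl = fun i => rk Fq (c i)}
      = {fun _ => m} ∪
        {rl : Fin t → ℕ | ∃ j : Fin t, rl = fun i => if i = j then m - 1 else m}) := by
  classical
  have hfinm : Module.Finite Fq Fqm := Module.Finite.of_finite
  -- `w i x` is the weight of the point `⟨x⟩` in `L_{U_i}`.
  let w : Fin t → (Fin k → Fqm) → ℕ := fun i x => Module.finrank Fq ↥(U i ⊓ lineFq Fq x)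
  let cw : (Fin k → Fqm) → ((i : Fin t) → Fin (m * k - n i) → Fqm) := fun x => ∑ r, x r • G r
  have hcw_mem : ∀ x, cw x ∈ C := by
    intro x
    rw [← hG.2]
    exact Submodule.sum_mem _ fun r _ => Submodule.smul_mem _ _ (Submodule.subset_span ⟨r, rfl⟩)
  have hcw_ne : ∀ x, x ≠ 0 → cw x ≠ 0 := fun x hx h =>
    hx (funext (Fintype.linearIndependent_iff.1 hG.1 x h))
  have hcw_surj : ∀ c ∈ C, c ≠ 0 → ∃ x, x ≠ 0 ∧ cw x = c := by
    intro c hc hc0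
    rw [← hG.2, Submodule.mem_span_range_iff_exists_fun] at hc
    obtain ⟨x, hx⟩ := hc
    refine ⟨x, ?_, hx⟩
    rintro rfl
    exact hc0 (by simpa using hx.symm)
  have hrk : ∀ x, x ≠ 0 → ∀ i, rk Fq (cw x i) = m - w i x := by
    intro x hx i
    have h := finrank_map_dualPerp (U i) hx
    rw [← hcols i, Submodule.map_span, ← Set.range_comp, hm] at h
    have hblock : cw x i = dotMap Fq x ∘ fun j rr => G rr i j := by
      funext j
      simp [cw, dotMap_apply, Finset.sum_apply]
    rw [rk, hblock]
    exact h
  have hw_le : ∀ x, x ≠ 0 → ∀ i, w i x ≤ 1 := fun x hx i => hscat i x hx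
  have hw_disj : ∀ x, x ≠ 0 → ∀ i j, i ≠ j → w i x = 0 ∨ w j x = 0 := fun x hx i j hij =>
    (hdisj i j hij x hx).imp (fun h => by simp [w, h]) (fun h => by simp [w, h])
  have hlist : ∀ x, x ≠ 0 → (fun i => rk Fq (cw x i)) = (fun _ => m) ∨
      ∃ j, (fun i => rk Fq (cw x i)) = fun i => if i = j then m - 1 else m := by
    intro x hx
    by_cases h : ∃ j, w j x ≠ 0
    · obtain ⟨j, hj⟩ := h
      refine Or.inr ⟨j, funext fun i => ?_⟩
      rw [hrk x hx i]
      split_ifs with hij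
      · subst hij
        have := hw_le x hx i
        omega
      · rw [(hw_disj x hx i j hij).resolve_right hj, Nat.sub_zero]
    · push Not at h
      exact Or.inl (funext fun i => by rw [hrk x hx i, h i, Nat.sub_zero])
  have hfull : ∃ x, x ≠ 0 ∧ (fun i => rk Fq (cw x i)) = fun _ => m := by
    obtain ⟨x, hx, h⟩ := hnotcover
    exact ⟨x, hx, funext fun i => by
      rw [hrk x hx i]
      simp only [w]
      rw [h i, finrank_bot, Nat.sub_zero]⟩
  have hdrop : ∀ j, ∃ x, x ≠ 0 ∧
      (fun i => rk Fq (cw x i)) = fun i => if i = j then m - 1 else m := by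
    intro j
    have hU : U j ≠ ⊥ := by
      intro h
      have h1 := hdim j
      have h2 := hn j
      rw [h, finrank_bot] at h1
      omega
    obtain ⟨x, hxU, hx⟩ := Submodule.exists_mem_ne_zero_of_ne_bot hU
    have hj : w j x ≠ 0 := by
      intro h
      have hbot : U j ⊓ lineFq Fq x = ⊥ := Submodule.finrank_eq_zero.1 h
      have hmem : x ∈ U j ⊓ lineFq Fq x := ⟨hxU, Submodule.mem_span_singleton_self x⟩
      rw [hbot] at hmem
      exact hx hmem
    have hj1 := hw_le x hx j
    refine ⟨x, hx, funext fun i => ?_⟩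
    rw [hrk x hx i]
    split_ifs with hij
    · subst hij
      omega
    · rw [(hw_disj x hx i j hij).resolve_right hj, Nat.sub_zero]
  have hsum_full : ∀ x, (fun i => rk Fq (cw x i)) = (fun _ => m) → srw Fq (cw x) = t * m := by
    intro x h
    simp [srw, fun i => congrFun h i]
  have hsum_drop : ∀ x j, (fun i => rk Fq (cw x i)) = (fun i => if i = j then m - 1 else m) →
      srw Fq (cw x) = t * m - 1 := by
    intro x j h
    have h1 : srw Fq (cw x) + 1 = t * m := by
      have h2 : ∀ i, rk Fq (cw x i) + (if i = j then 1 else 0) = m := by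
        intro i
        rw [congrFun h i]
        split_ifs <;> omega
      calc srw Fq (cw x) + 1
          = ∑ i, (rk Fq (cw x i) + (if i = j then 1 else 0)) := by
            simp [srw, Finset.sum_add_distrib]
        _ = t * m := by simp [h2]
    omega
  refine ⟨?_, ?_, ?_, ?_⟩
  · intro c hc hc0
    obtain ⟨x, hx, rfl⟩ := hcw_surj c hc hc0
    exact (hlist x hx).imp (hsum_full x) fun ⟨j, hj⟩ => hsum_drop x j hj
  · obtain ⟨x, hx, h⟩ := hfull
    exact ⟨cw x, hcw_mem x, hcw_ne x hx, hsum_full x h⟩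
  · obtain ⟨x, hx, h⟩ := hdrop ⟨0, ht⟩
    exact ⟨cw x, hcw_mem x, hcw_ne x hx, hsum_drop x _ h⟩
  · ext rl
    constructor
    · rintro ⟨c, hc, hc0, rfl⟩
      obtain ⟨x, hx, rfl⟩ := hcw_surj c hc hc0
      exact hlist x hx
    · rintro (h | ⟨j, h⟩)
      · obtain ⟨x, hx, hx'⟩ := hfull
        exact ⟨cw x, hcw_mem x, hcw_ne x hx, h.trans hx'.symm⟩
      · obtain ⟨x, hx, hx'⟩ := hdrop j
        exact ⟨cw x, hcw_mem x, hcw_ne x hx, h.trans hx'.symm⟩
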